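/- Carry-over of completeness: suppose r is a reduction from H to H'. Then: (i) if H' is complete then H is complete; (ii) for all CKA terms e, f, cl_H(⟦e⟧) = cl_H(⟦f⟧) if and only if cl_{H'}(⟦r(e)⟧) = cl_{H'}(⟦r(f)⟧). -/

import Mathlib

namespace CKAH

open Classical

/-! ### Labelled posets and pomsets -/

/-- A labelled poset over alphabet `A`: a finite carrier with a partial order and labelling. -/
structure LPoset (A : Type) : Type 1 where
  carrier : Type
  [fin : Fintype carrier]
  [ord : PartialOrder carrier]
  lab : carrier → A

attribute [instance] LPoset.fin LPoset.ord

/-- Isomorphism of labelled posets: an order isomorphism preserving labels. -/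
def LPoset.Iso {A : Type} (u v : LPoset A) : Prop :=
  ∃ e : u.carrier ≃o v.carrier, ∀ x, v.lab (e x) = u.lab x

theorem LPoset.iso_equivalence (A : Type) : Equivalence (LPoset.Iso (A := A)) where
  refl u := ⟨OrderIso.refl _, fun _ => rfl⟩
  symm := by
    rintro u v ⟨e, he⟩
    exact ⟨e.symm, fun x => by rw [← he (e.symm x), OrderIso.apply_symm_apply]⟩
  trans := by
    rintro u v w ⟨e, he⟩ ⟨f, hf⟩
    exact ⟨e.trans f, fun x => by rw [OrderIso.trans_apply, hf, he]⟩

instance pomSetoid (A : Type) : Setoid (LPoset A) := ⟨LPoset.Iso, LPoset.iso_equivalence A⟩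

/-- A pomset is an isomorphism class of labelled posets. -/
def Pomset (A : Type) : Type 1 := Quotient (pomSetoid A)

/-- Sequential composition of labelled posets: disjoint union, everything on the left
below everything on the right (lexicographic sum order). -/
def LPoset.seqL {A : Type} (u v : LPoset A) : LPoset A where
  carrier := u.carrier ⊕ₗ v.carrier
  fin := inferInstanceAs (Fintype (u.carrier ⊕ v.carrier))
  lab := fun x => Sum.elim u.lab v.lab (ofLex x)

/-- Parallel composition of labelled posets: disjoint union with no cross ordering. -/
def LPoset.parL {A : Type} (u v : LPoset A) : LPoset A where
  carrier := u.carrier ⊕ v.carrier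
  lab := Sum.elim u.lab v.lab

def Pomset.seq {A : Type} : Pomset A → Pomset A → Pomset A :=
  Quotient.map₂ LPoset.seqL (by
    rintro u₁ u₂ ⟨e, he⟩ v₁ v₂ ⟨f, hf⟩
    refine ⟨(RelIso.sumLexCongr e f :
      (u₁.carrier ⊕ₗ v₁.carrier) ≃o (u₂.carrier ⊕ₗ v₂.carrier)), ?_⟩
    rintro (x | x)
    · exact he x
    · exact hf x)

/-- Order isomorphism between disjoint-union orders, from component isomorphisms. -/
def sumOrderIso {α β γ δ : Type} [PartialOrder α] [PartialOrder β] [PartialOrder γ]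
    [PartialOrder δ] (e : α ≃o γ) (f : β ≃o δ) : (α ⊕ β) ≃o (γ ⊕ δ) where
  toEquiv := Equiv.sumCongr e.toEquiv f.toEquiv
  map_rel_iff' := by
    rintro (x | x) (y | y) <;> simp [Sum.le_def, e.le_iff_le, f.le_iff_le]

def Pomset.par {A : Type} : Pomset A → Pomset A → Pomset A :=
  Quotient.map₂ LPoset.parL (by
    rintro u₁ u₂ ⟨e, he⟩ v₁ v₂ ⟨f, hf⟩
    refine ⟨sumOrderIso e f, ?_⟩
    rintro (x | x)
    · exact he x
    · exact hf x)

def LPoset.emptyL (A : Type) : LPoset A := { carrier := Fin 0, lab := fun x => x.elim0 }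

def LPoset.singleL {A : Type} (a : A) : LPoset A := { carrier := PUnit, lab := fun _ => a }

/-- The empty pomset `1`. -/
def Pomset.empty (A : Type) : Pomset A := ⟦LPoset.emptyL A⟧

/-- The single-letter pomset. -/
def Pomset.single {A : Type} (a : A) : Pomset A := ⟦LPoset.singleL a⟧

/-- Subsumption on labelled posets: `u ⊑ v` iff there is a label-preserving
order-preserving bijection from the carrier of `v` to that of `u`. -/
def LPoset.subL {A : Type} (u v : LPoset A) : Prop :=
  ∃ h : v.carrier ≃ u.carrier,
    (∀ x, u.lab (h x) = v.lab x) ∧ ∀ x y : v.carrier, x ≤ y → h x ≤ h y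

/-- Subsumption of pomsets: `Pomset.sub U V` means `U ⊑ V`. -/
def Pomset.sub {A : Type} : Pomset A → Pomset A → Prop :=
  Quotient.lift₂ LPoset.subL (by
    rintro u₁ v₁ u₂ v₂ ⟨e, he⟩ ⟨f, hf⟩
    refine propext ⟨?_, ?_⟩
    · rintro ⟨h, hl, hm⟩
      refine ⟨(f.toEquiv.symm.trans h).trans e.toEquiv, fun x => ?_, fun x y hxy => ?_⟩
      · show u₂.lab (e (h (f.symm x))) = v₂.lab x
        rw [he, hl, ← hf (f.symm x), OrderIso.apply_symm_apply]
      · simp only [Equiv.trans_apply]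
        exact e.le_iff_le.mpr (hm _ _ (f.symm.le_iff_le.mpr hxy))
    · rintro ⟨h, hl, hm⟩
      refine ⟨(f.toEquiv.trans h).trans e.toEquiv.symm, fun x => ?_, fun x y hxy => ?_⟩
      · show u₁.lab (e.symm (h (f x))) = v₁.lab x
        rw [← he (e.symm (h (f x))), OrderIso.apply_symm_apply, hl, hf]
      · simp only [Equiv.trans_apply]
        exact e.symm.le_iff_le.mpr (hm _ _ (f.le_iff_le.mpr hxy)))

def LPoset.isWordL {A : Type} (u : LPoset A) : Prop := ∀ x y : u.carrier, x ≤ y ∨ y ≤ x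

/-- A pomset is a word when it is totally ordered. -/
def Pomset.IsWord {A : Type} : Pomset A → Prop :=
  Quotient.lift LPoset.isWordL (by
    rintro u v ⟨e, -⟩
    refine propext ⟨fun h x y => ?_, fun h x y => ?_⟩
    · rcases h (e.symm x) (e.symm y) with h' | h'
      · exact Or.inl (e.symm.le_iff_le.mp h')
      · exact Or.inr (e.symm.le_iff_le.mp h')
    · rcases h (e x) (e y) with h' | h'
      · exact Or.inl (e.le_iff_le.mp h')
      · exact Or.inr (e.le_iff_le.mp h'))

def LPoset.mapL {A B : Type} (f : A → B) (u : LPoset A) : LPoset B :=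
  { carrier := u.carrier, lab := f ∘ u.lab }

/-- Relabelling of pomsets along a function on letters. -/
def Pomset.map {A B : Type} (f : A → B) : Pomset A → Pomset B :=
  Quotient.map (LPoset.mapL f)
    (by rintro u v ⟨e, he⟩; exact ⟨e, fun x => by exact congrArg f (he x)⟩)

def LPoset.overL {A : Type} (Γ : Set A) (u : LPoset A) : Prop := ∀ x, u.lab x ∈ Γ

/-- All labels of the pomset belong to `Γ`. -/
def Pomset.Over {A : Type} (Γ : Set A) : Pomset A → Prop :=
  Quotient.lift (LPoset.overL Γ) (by
    rintro u v ⟨e, he⟩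
    refine propext ⟨fun h x => ?_, fun h x => ?_⟩
    · have h2 := he (e.symm x)
      rw [OrderIso.apply_symm_apply] at h2
      rw [h2]; exact h _
    · rw [← he x]; exact h _)

/-- Series-parallel pomsets. -/
inductive Pomset.IsSP {A : Type} : Pomset A → Prop
  | empty : Pomset.IsSP (Pomset.empty A)
  | single (a : A) : Pomset.IsSP (Pomset.single a)
  | seq {U V : Pomset A} : Pomset.IsSP U → Pomset.IsSP V → Pomset.IsSP (Pomset.seq U V)
  | par {U V : Pomset A} : Pomset.IsSP U → Pomset.IsSP V → Pomset.IsSP (Pomset.par U V)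

def SPset (A : Type) : Set (Pomset A) := {U | U.IsSP}

/-! ### Pomset contexts -/

/-- Contexts are pomsets over `Option A`, where `none` plays the role of `*`.
`uniqueStarL` says there is exactly one `*`-labelled node. -/
def LPoset.uniqueStarL {A : Type} (c : LPoset (Option A)) : Prop := ∃! x, c.lab x = none

theorem LPoset.uniqueStarL_congr {A : Type} {u v : LPoset (Option A)}
    (e : u.carrier ≃o v.carrier) (he : ∀ x, v.lab (e x) = u.lab x) :
    u.uniqueStarL ↔ v.uniqueStarL := by
  constructor
  · rintro ⟨x, hx, hux⟩
    refine ⟨e x, show v.lab (e x) = none by rw [he]; exact hx, fun y hy => ?_⟩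
    have h2 := he (e.symm y)
    rw [OrderIso.apply_symm_apply] at h2
    have h3 : e.symm y = x := hux _ (h2.symm.trans hy)
    rw [← h3, OrderIso.apply_symm_apply]
  · rintro ⟨x, hx, hvx⟩
    refine ⟨e.symm x, ?_, fun y hy => ?_⟩
    · show u.lab (e.symm x) = none
      have h2 := he (e.symm x)
      rw [OrderIso.apply_symm_apply] at h2
      rw [← h2]; exact hx
    · have h3 : e y = x := hvx _ (show v.lab (e y) = none by rw [he]; exact hy)
      rw [← h3, OrderIso.symm_apply_apply]

/-- A pomset context: exactly one node labelled `*`. -/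
def Pomset.IsCtx {A : Type} : Pomset (Option A) → Prop :=
  Quotient.lift LPoset.uniqueStarL
    (fun _ _ h => propext (LPoset.uniqueStarL_congr h.choose h.choose_spec))

/-- Series-parallel pomset contexts. -/
def Pomset.IsSPCtx {A : Type} (C : Pomset (Option A)) : Prop := C.IsCtx ∧ C.IsSP

/-- Sequential (totally ordered) pomset contexts. -/
def Pomset.IsSeqCtx {A : Type} (C : Pomset (Option A)) : Prop := C.IsCtx ∧ C.IsWord

/-- The trivial context `*`. -/
def starCtx (A : Type) : Pomset (Option A) := Pomset.single (none : Option A)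

theorem option_get_eq_get {α : Type} {o₁ o₂ : Option α} (h : o₁ = o₂) (h₁ : o₁.isSome)
    (h₂ : o₂.isSome) : o₁.get h₁ = o₂.get h₂ := by subst h; rfl

/-- The order of `C[U]`: the orders of `C` (restricted away from `*`) and of `U`, with a
point of `C` below (resp. above) all of `U` when it is below (resp. above) the unique
`*`-node of `C`.  (For well-definedness of the order, the cross-relations are guarded by
the requirement that the star node is unique, which holds for every genuine context.) -/
def LPoset.insLe {A : Type} (c : LPoset (Option A)) (u : LPoset A) :
    ({x : c.carrier // c.lab x ≠ none} ⊕ u.carrier) →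
    ({x : c.carrier // c.lab x ≠ none} ⊕ u.carrier) → Prop
  | Sum.inl x, Sum.inl y => x.val ≤ y.val
  | Sum.inr x, Sum.inr y => x ≤ y
  | Sum.inl x, Sum.inr _ => c.uniqueStarL ∧ ∃ s, c.lab s = none ∧ x.val ≤ s
  | Sum.inr _, Sum.inl y => c.uniqueStarL ∧ ∃ s, c.lab s = none ∧ s ≤ y.val

/-- Insertion of a labelled poset `u` into the gap of a context `c`: the `*`-labelled
node is removed and `u` is put in its place, inheriting the order relations of `*`. -/
noncomputable def LPoset.insL {A : Type} (c : LPoset (Option A)) (u : LPoset A) :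
    LPoset A where
  carrier := {x : c.carrier // c.lab x ≠ none} ⊕ u.carrier
  fin := by classical exact inferInstance
  ord :=
    { le := LPoset.insLe c u
      lt := fun p q => LPoset.insLe c u p q ∧ ¬ LPoset.insLe c u q p
      lt_iff_le_not_ge := fun _ _ => Iff.rfl
      le_refl := by rintro (x | x) <;> exact le_refl _
      le_trans := by
        rintro (x | x) (y | y) (z | z) h1 h2
        · exact le_trans h1 h2
        · obtain ⟨hu, s, hs, hys⟩ := h2
          exact ⟨hu, s, hs, le_trans h1 hys⟩
        · obtain ⟨hu, s, hs, hxs⟩ := h1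
          obtain ⟨-, t, ht, htz⟩ := h2
          obtain ⟨w, hw, huniq⟩ := hu
          have hst : s = t := (huniq s hs).trans (huniq t ht).symm
          exact le_trans (hst ▸ hxs) htz
        · exact h1
        · obtain ⟨hu, s, hs, hsy⟩ := h1
          exact ⟨hu, s, hs, le_trans hsy h2⟩
        · obtain ⟨hu, s, hs, hsy⟩ := h1
          obtain ⟨-, t, ht, hyt⟩ := h2
          obtain ⟨w, hw, huniq⟩ := hu
          have hst : s = t := (huniq s hs).trans (huniq t ht).symm
          have hy : y.val = s := le_antisymm (hst.symm ▸ hyt) hsy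
          exact absurd (hy.symm ▸ hs) y.prop
        · exact h2
        · exact le_trans h1 h2
      le_antisymm := by
        rintro (x | x) (y | y) h1 h2
        · exact congrArg Sum.inl (Subtype.ext (le_antisymm h1 h2))
        · obtain ⟨hu, s, hs, hxs⟩ := h1
          obtain ⟨-, t, ht, htx⟩ := h2
          obtain ⟨w, hw, huniq⟩ := hu
          have hst : s = t := (huniq s hs).trans (huniq t ht).symm
          have hx : x.val = s := le_antisymm hxs (hst.symm ▸ htx)
          exact absurd (hx.symm ▸ hs) x.prop
        · obtain ⟨hu, s, hs, hsy⟩ := h1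
          obtain ⟨-, t, ht, hyt⟩ := h2
          obtain ⟨w, hw, huniq⟩ := hu
          have hst : s = t := (huniq s hs).trans (huniq t ht).symm
          have hy : y.val = s := le_antisymm (hst.symm ▸ hyt) hsy
          exact absurd (hy.symm ▸ hs) y.prop
        · exact congrArg Sum.inr (le_antisymm h1 h2) }
  lab := Sum.elim (fun x => (c.lab x.val).get (Option.isSome_iff_ne_none.mpr x.prop)) u.lab

/-- `Pomset.ins C U` is `C[U]`: plugging the pomset `U` into the gap of the context `C`. -/
noncomputable def Pomset.ins {A : Type} : Pomset (Option A) → Pomset A → Pomset A :=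
  Quotient.map₂ LPoset.insL (by
    rintro c₁ c₂ ⟨e, he⟩ u₁ u₂ ⟨f, hf⟩
    have hstar : c₁.uniqueStarL ↔ c₂.uniqueStarL := LPoset.uniqueStarL_congr e he
    refine ⟨{ toEquiv := Equiv.sumCongr
                (e.toEquiv.subtypeEquiv fun x => by
                  rw [show c₂.lab (e.toEquiv x) = c₁.lab x from he x]) f.toEquiv
              map_rel_iff' := ?_ }, ?_⟩
    · rintro (x | x) (y | y)
      · exact e.le_iff_le
      · show (c₂.uniqueStarL ∧ ∃ s, c₂.lab s = none ∧ (e x.val : c₂.carrier) ≤ s) ↔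
             (c₁.uniqueStarL ∧ ∃ s, c₁.lab s = none ∧ x.val ≤ s)
        constructor
        · rintro ⟨hu, s, hs, hxs⟩
          refine ⟨hstar.mpr hu, e.symm s, ?_, ?_⟩
          · have h2 := he (e.symm s)
            rw [OrderIso.apply_symm_apply] at h2
            rw [← h2]; exact hs
          · exact e.le_iff_le.mp (by rw [OrderIso.apply_symm_apply]; exact hxs)
        · rintro ⟨hu, s, hs, hxs⟩
          exact ⟨hstar.mp hu, e s, by rw [he]; exact hs, e.le_iff_le.mpr hxs⟩
      · show (c₂.uniqueStarL ∧ ∃ s, c₂.lab s = none ∧ s ≤ (e y.val : c₂.carrier)) ↔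
             (c₁.uniqueStarL ∧ ∃ s, c₁.lab s = none ∧ s ≤ y.val)
        constructor
        · rintro ⟨hu, s, hs, hsy⟩
          refine ⟨hstar.mpr hu, e.symm s, ?_, ?_⟩
          · have h2 := he (e.symm s)
            rw [OrderIso.apply_symm_apply] at h2
            rw [← h2]; exact hs
          · exact e.le_iff_le.mp (by rw [OrderIso.apply_symm_apply]; exact hsy)
        · rintro ⟨hu, s, hs, hsy⟩
          exact ⟨hstar.mp hu, e s, by rw [he]; exact hs, e.le_iff_le.mpr hsy⟩
      · exact f.le_iff_le
    · rintro (x | x)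
      · exact option_get_eq_get (he x.val) _ _
      · exact hf x)

/-! ### Pomset languages -/

abbrev Lang (A : Type) := Set (Pomset A)

def Lang.seq {A : Type} (L K : Lang A) : Lang A :=
  {W | ∃ U ∈ L, ∃ V ∈ K, W = Pomset.seq U V}

def Lang.par {A : Type} (L K : Lang A) : Lang A :=
  {W | ∃ U ∈ L, ∃ V ∈ K, W = Pomset.par U V}

def Lang.pow {A : Type} (L : Lang A) : ℕ → Lang A
  | 0 => {Pomset.empty A}
  | n + 1 => Lang.seq (Lang.pow L n) L

def Lang.star {A : Type} (L : Lang A) : Lang A := ⋃ n, L.pow n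

/-- Application of a context to a language: `C[L] = {C[U] : U ∈ L}`. -/
def Ctx.img {A : Type} (C : Pomset (Option A)) (L : Lang A) : Lang A :=
  {W | ∃ U ∈ L, W = C.ins U}

/-! ### CKA terms and semantics -/

inductive Term (A : Type) : Type
  | zero : Term A
  | one : Term A
  | var : A → Term A
  | add : Term A → Term A → Term A
  | seq : Term A → Term A → Term A
  | par : Term A → Term A → Term A
  | star : Term A → Term A

/-- Pomset language semantics of CKA terms. -/
def Term.lang {A : Type} : Term A → Lang A
  | .zero => ∅
  | .one => {Pomset.empty A}
  | .var a => {Pomset.single a}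
  | .add e f => e.lang ∪ f.lang
  | .seq e f => Lang.seq e.lang f.lang
  | .par e f => Lang.par e.lang f.lang
  | .star e => Lang.star e.lang

/-- Sets of hypotheses: a hypothesis `e ≤ f` is the pair `(e, f)`. -/
abbrev HypSet (A : Type) := Set (Term A × Term A)

/-- The congruence `≡^H` on CKA terms generated by the CKA axioms and the hypotheses `H`
(the constructor `hyp` encodes `e ≦^H f`, i.e. `e + f ≡^H f`, for `e ≤ f ∈ H`). -/
inductive CongH {A : Type} (H : HypSet A) : Term A → Term A → Prop
  | refl (e) : CongH H e e
  | symm {e f} : CongH H e f → CongH H f e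
  | trans {e f g} : CongH H e f → CongH H f g → CongH H e g
  | addCong {e e' f f'} : CongH H e e' → CongH H f f' → CongH H (.add e f) (.add e' f')
  | seqCong {e e' f f'} : CongH H e e' → CongH H f f' → CongH H (.seq e f) (.seq e' f')
  | parCong {e e' f f'} : CongH H e e' → CongH H f f' → CongH H (.par e f) (.par e' f')
  | starCong {e e'} : CongH H e e' → CongH H (.star e) (.star e')
  | addZero (e) : CongH H (.add e .zero) e
  | addIdem (e) : CongH H (.add e e) e
  | addComm (e f) : CongH H (.add e f) (.add f e)
  | addAssoc (e f g) : CongH H (.add e (.add f g)) (.add (.add e f) g)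
  | seqAssoc (e f g) : CongH H (.seq e (.seq f g)) (.seq (.seq e f) g)
  | seqDistL (e f g) : CongH H (.seq e (.add f g)) (.add (.seq e f) (.seq e g))
  | seqDistR (e f g) : CongH H (.seq (.add e f) g) (.add (.seq e g) (.seq f g))
  | seqOneR (e) : CongH H (.seq e .one) e
  | seqOneL (e) : CongH H (.seq .one e) e
  | seqZeroR (e) : CongH H (.seq e .zero) .zero
  | seqZeroL (e) : CongH H (.seq .zero e) .zero
  | parComm (e f) : CongH H (.par e f) (.par f e)
  | parOne (e) : CongH H (.par e .one) e
  | parZero (e) : CongH H (.par e .zero) .zero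
  | parAssoc (e f g) : CongH H (.par e (.par f g)) (.par (.par e f) g)
  | parDist (e f g) : CongH H (.par e (.add f g)) (.add (.par e f) (.par e g))
  | starUnfoldL (e) : CongH H (.add .one (.seq e (.star e))) (.star e)
  | starUnfoldR (e) : CongH H (.add .one (.seq (.star e) e)) (.star e)
  | lfpL {e f g} : CongH H (.add (.add e (.seq f g)) g) g →
      CongH H (.add (.seq (.star f) e) g) g
  | lfpR {e f g} : CongH H (.add (.add e (.seq f g)) f) f →
      CongH H (.add (.seq e (.star g)) f) f
  | hyp {e f} : (e, f) ∈ H → CongH H (.add e f) f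

/-- `e ≦^H f`, the natural order `e + f ≡^H f`. -/
def LeH {A : Type} (H : HypSet A) (e f : Term A) : Prop := CongH H (.add e f) f

/-- The `H`-closure of a pomset language, as an inductive predicate: the smallest language
containing `L` such that for all `e ≤ f ∈ H` and series-parallel contexts `C`,
if `C[⟦f⟧] ⊆ cl` then `C[⟦e⟧] ⊆ cl`. -/
inductive closure {A : Type} (H : HypSet A) (L : Lang A) : Pomset A → Prop
  | base {U} : U ∈ L → closure H L U
  | step {e f : Term A} (hef : (e, f) ∈ H) {C : Pomset (Option A)} (hC : C.IsSPCtx)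
      (hf : ∀ V ∈ f.lang, closure H L (C.ins V)) {U} (hU : U ∈ e.lang) :
      closure H L (C.ins U)

/-- `cl H L` is the `H`-closure of `L`. -/
def cl {A : Type} (H : HypSet A) (L : Lang A) : Lang A := {U | closure H L U}

/-- The sequential closure: like `cl` but only sequential contexts are used. -/
inductive seqClosure {A : Type} (H : HypSet A) (L : Lang A) : Pomset A → Prop
  | base {U} : U ∈ L → seqClosure H L U
  | step {e f : Term A} (hef : (e, f) ∈ H) {C : Pomset (Option A)} (hC : C.IsSeqCtx)
      (hf : ∀ V ∈ f.lang, seqClosure H L (C.ins V)) {U} (hU : U ∈ e.lang) :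
      seqClosure H L (C.ins U)

def seqCl {A : Type} (H : HypSet A) (L : Lang A) : Lang A := {U | seqClosure H L U}

/-! ### Implication, completeness, reductions -/

/-- `H` implies `H'`: every hypothesis of `H'` is derivable from `H`. -/
def Implies {A : Type} (H H' : HypSet A) : Prop := ∀ p ∈ H', LeH H p.1 p.2

/-- `H` is complete: semantic equivalence implies axiomatic equivalence. -/
def Complete {A : Type} (H : HypSet A) : Prop :=
  ∀ e f : Term A, cl H e.lang = cl H f.lang → CongH H e f

/-- A reduction from `H` to `H'` (presupposing that `H` implies `H'`). -/
structure IsReduction {A : Type} (H H' : HypSet A) (r : Term A → Term A) : Prop where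
  implies : Implies H H'
  equiv : ∀ e, CongH H e (r e)
  reflect : ∀ e f : Term A, cl H e.lang = cl H f.lang → cl H' (r e).lang = cl H' (r f).lang

def Reduces {A : Type} (H H' : HypSet A) : Prop := ∃ r, IsReduction H H' r

/-- A strong reduction from `H` to `H'`. -/
structure IsStrongReduction {A : Type} (H H' : HypSet A) (r : Term A → Term A)
    extends IsReduction H H' r : Prop where
  strong : ∀ e : Term A, cl H e.lang = cl H' (r e).lang

def StronglyReduces {A : Type} (H H' : HypSet A) : Prop := ∃ r, IsStrongReduction H H' r

/-- `H` factorises into `H₀` and `H₁`. -/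
def Factorises {A : Type} (H H₀ H₁ : HypSet A) : Prop :=
  Implies H H₀ ∧ Implies H H₁ ∧ ∀ L : Lang A, L ⊆ SPset A → cl H L = cl H₁ (cl H₀ L)

/-! ### The exchange hypotheses and sp-subsumption -/

/-- The exchange hypotheses `(e∥f)·(g∥h) ≤ (e·g)∥(f·h)`. -/
def exch (A : Type) : HypSet A :=
  {p | ∃ e f g h : Term A,
    p = (Term.seq (.par e f) (.par g h), Term.par (.seq e g) (.seq f h))}

/-- `⊑^sp`: the smallest precongruence on series-parallel pomsets satisfying the
exchange inequality. -/
inductive spSub {A : Type} : Pomset A → Pomset A → Prop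
  | refl {U : Pomset A} : U.IsSP → spSub U U
  | trans {U V W} : spSub U V → spSub V W → spSub U W
  | seqCong {U V U' V'} : spSub U V → spSub U' V' → spSub (Pomset.seq U U') (Pomset.seq V V')
  | parCong {U V U' V'} : spSub U V → spSub U' V' → spSub (Pomset.par U U') (Pomset.par V V')
  | exch {U V W X : Pomset A} : U.IsSP → V.IsSP → W.IsSP → X.IsSP →
      spSub (Pomset.seq (Pomset.par U V) (Pomset.par W X))
            (Pomset.par (Pomset.seq U W) (Pomset.seq V X))

/-! ### KA terms, grounded hypotheses, sequential reductions -/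

/-- A term is a KA term when it contains no `∥`. -/
def Term.noPar {A : Type} : Term A → Prop
  | .zero => True
  | .one => True
  | .var _ => True
  | .add e f => e.noPar ∧ f.noPar
  | .seq e f => e.noPar ∧ f.noPar
  | .par _ _ => False
  | .star e => e.noPar

/-- A non-empty word. -/
def IsNonemptyWord {A : Type} (W : Pomset A) : Prop := W.IsWord ∧ W ≠ Pomset.empty A

/-- A set of hypotheses is grounded when in each hypothesis `e ≤ f`, `e` is a KA term and
`⟦f⟧ = {W}` for a non-empty word `W`. -/
def Grounded {A : Type} (H : HypSet A) : Prop :=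
  ∀ p ∈ H, p.1.noPar ∧ ∃ W : Pomset A, IsNonemptyWord W ∧ p.2.lang = {W}

/-- `≡_KA^H`: the congruence on terms generated by the axioms of `≡` not involving `∥`
together with the hypotheses of `H`. -/
inductive KACong {A : Type} (H : HypSet A) : Term A → Term A → Prop
  | refl (e) : KACong H e e
  | symm {e f} : KACong H e f → KACong H f e
  | trans {e f g} : KACong H e f → KACong H f g → KACong H e g
  | addCong {e e' f f'} : KACong H e e' → KACong H f f' → KACong H (.add e f) (.add e' f')
  | seqCong {e e' f f'} : KACong H e e' → KACong H f f' → KACong H (.seq e f) (.seq e' f')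
  | starCong {e e'} : KACong H e e' → KACong H (.star e) (.star e')
  | addZero (e) : KACong H (.add e .zero) e
  | addIdem (e) : KACong H (.add e e) e
  | addComm (e f) : KACong H (.add e f) (.add f e)
  | addAssoc (e f g) : KACong H (.add e (.add f g)) (.add (.add e f) g)
  | seqAssoc (e f g) : KACong H (.seq e (.seq f g)) (.seq (.seq e f) g)
  | seqDistL (e f g) : KACong H (.seq e (.add f g)) (.add (.seq e f) (.seq e g))
  | seqDistR (e f g) : KACong H (.seq (.add e f) g) (.add (.seq e g) (.seq f g))
  | seqOneR (e) : KACong H (.seq e .one) e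
  | seqOneL (e) : KACong H (.seq .one e) e
  | seqZeroR (e) : KACong H (.seq e .zero) .zero
  | seqZeroL (e) : KACong H (.seq .zero e) .zero
  | starUnfoldL (e) : KACong H (.add .one (.seq e (.star e))) (.star e)
  | starUnfoldR (e) : KACong H (.add .one (.seq (.star e) e)) (.star e)
  | lfpL {e f g} : KACong H (.add (.add e (.seq f g)) g) g →
      KACong H (.add (.seq (.star f) e) g) g
  | lfpR {e f g} : KACong H (.add (.add e (.seq f g)) f) f →
      KACong H (.add (.seq e (.star g)) f) f
  | hyp {e f} : (e, f) ∈ H → KACong H (.add e f) f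

/-- A sequential reduction from `H` to `H'`. -/
structure IsSeqReduction {A : Type} (H H' : HypSet A) (r : Term A → Term A) : Prop where
  implies : Implies H H'
  equiv : ∀ e : Term A, e.noPar → KACong H e (r e)
  closure_eq : ∀ e : Term A, e.noPar → seqCl H e.lang = seqCl H' (r e).lang

/-- Extension of a map on (KA) terms to all CKA terms, homomorphically on `∥`. -/
def parExt {A : Type} (r : Term A → Term A) : Term A → Term A
  | .par e f => .par (parExt r e) (parExt r f)
  | e => r e

/-! ### Inductive characterisation of sp contexts -/

/-- The generators of series-parallel contexts (Lemma: `PC^sp` is the smallest such set). -/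
inductive GenCtx {A : Type} : Pomset (Option A) → Prop
  | star : GenCtx (Pomset.single (none : Option A))
  | seqL {U : Pomset A} {C} : U.IsSP → GenCtx C → GenCtx (Pomset.seq (Pomset.map some U) C)
  | seqR {C} {V : Pomset A} : GenCtx C → V.IsSP → GenCtx (Pomset.seq C (Pomset.map some V))
  | par {U : Pomset A} {C} : U.IsSP → GenCtx C → GenCtx (Pomset.par (Pomset.map some U) C)

/-! ### Reification -/

/-- Homomorphic extension of a letter map to terms. -/
def rTerm {A : Type} (r : A → Term A) : Term A → Term A
  | .zero => .zero
  | .one => .one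
  | .var a => r a
  | .add e f => .add (rTerm r e) (rTerm r f)
  | .seq e f => .seq (rTerm r e) (rTerm r f)
  | .par e f => .par (rTerm r e) (rTerm r f)
  | .star e => .star (rTerm r e)

/-- All letters of a term lie in `Γ`. -/
def TermOver {A : Type} (Γ : Set A) : Term A → Prop
  | .zero => True
  | .one => True
  | .var a => a ∈ Γ
  | .add e f => TermOver Γ e ∧ TermOver Γ f
  | .seq e f => TermOver Γ e ∧ TermOver Γ f
  | .par e f => TermOver Γ e ∧ TermOver Γ f
  | .star e => TermOver Γ e

/-- Extension of a letter map `r` to (series-parallel) pomsets, as a relation: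
`rMap r U V` means `V ∈ r(U)`. -/
inductive rMap {A : Type} (r : A → Term A) : Pomset A → Pomset A → Prop
  | one : rMap r (Pomset.empty A) (Pomset.empty A)
  | var (a : A) {V} : V ∈ (r a).lang → rMap r (Pomset.single a) V
  | seq {U U' V V'} : rMap r U V → rMap r U' V' →
      rMap r (Pomset.seq U U') (Pomset.seq V V')
  | par {U U' V V'} : rMap r U V → rMap r U' V' →
      rMap r (Pomset.par U U') (Pomset.par V V')

/-- Image of a language under (the pomset extension of) `r`. -/
def rImg {A : Type} (r : A → Term A) (L : Lang A) : Lang A := {V | ∃ U ∈ L, rMap r U V}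

/-- Series-parallel pomsets over the subalphabet `Γ`. -/
def SPover {A : Type} (Γ : Set A) : Lang A := {U | U.IsSP ∧ U.Over Γ}

/-- `r : Σ → Term Γ` is a reification from `H` to `H'`. -/
structure IsReification {A : Type} (Γ : Set A) (H H' : HypSet A) (r : A → Term A) : Prop where
  toGamma : ∀ a : A, TermOver Γ (r a)
  equiv : ∀ a : A, CongH H (r a) (.var a)
  expansive : ∀ a ∈ Γ, LeH (∅ : HypSet A) (.var a) (r a)
  preserves : ∀ L : Lang A, L ⊆ SPover Γ → cl H' L ⊆ SPover Γ
  hyps : ∀ p ∈ H, LeH H' (rTerm r p.1) (rTerm r p.2)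

end CKAH

namespace CKAH

/-!
For a context `C`, the pomset `C[V]` is the result of substituting `V` for the letter `*` in `C`.
Associativity of substitution gives `C[D[V]] = (C[D])[V]`, so the contexts are closed under
composition, and an induction on the closure shows that `cl H` respects contexts: if
`C[L] ⊆ cl H K`, then `C[cl H L] ⊆ cl H K`. Applied to the contexts `* · V`, `V · *` and `* ∥ V`
this yields `cl H L · cl H K ⊆ cl H (L · K)`, and likewise for `∥`, which makes `cl H ⟦-⟧` sound
for `≡^H`. If `H` implies `H'`, then `≡^{H'}` is contained in `≡^H` and, by soundness,
`cl H' L ⊆ cl H L`, so that `cl H (cl H' L) = cl H L`. Both claims then follow by passing from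
`e` to `r e` along `e ≡^H r e`.
-/

/-! ### Substitution in pomsets -/

namespace LPoset

variable {A B D : Type}

/-- The order of `u` as a relation. The carriers of compound posets are type synonyms of sums and
sigma types, on which a bare `≤` can elaborate to the order of the unlabelled type. -/
protected abbrev le (u : LPoset A) (x y : u.carrier) : Prop := x ≤ y

theorem mk_eq_mk_of_equiv {u v : LPoset A} (e : u.carrier ≃ v.carrier)
    (hle : ∀ x y, v.le (e x) (e y) ↔ u.le x y) (hlab : ∀ x, v.lab (e x) = u.lab x) :
    (⟦u⟧ : Pomset A) = ⟦v⟧ :=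
  Quotient.sound ⟨⟨e, hle _ _⟩, hlab⟩

theorem injective_of_le_iff {u : LPoset A} {v : LPoset B} {f : u.carrier → v.carrier}
    (hf : ∀ x y, v.le (f x) (f y) ↔ u.le x y) : Function.Injective f :=
  fun x y h => le_antisymm ((hf x y).1 h.le) ((hf y x).1 h.ge)

section SumOrder

variable {u v : LPoset A}

theorem seqL_inl_le_inl {x y : u.carrier} :
    (seqL u v).le (Sum.inl x) (Sum.inl y) ↔ u.le x y :=
  Sum.Lex.inl_le_inl_iff

theorem seqL_inr_le_inr {x y : v.carrier} :
    (seqL u v).le (Sum.inr x) (Sum.inr y) ↔ v.le x y :=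
  Sum.Lex.inr_le_inr_iff

theorem seqL_inl_le_inr (x : u.carrier) (y : v.carrier) :
    (seqL u v).le (Sum.inl x) (Sum.inr y) :=
  Sum.Lex.inl_le_inr x y

theorem seqL_not_inr_le_inl (x : v.carrier) (y : u.carrier) :
    ¬(seqL u v).le (Sum.inr x) (Sum.inl y) :=
  Sum.Lex.not_inr_le_inl

theorem parL_inl_le_inl {x y : u.carrier} :
    (parL u v).le (Sum.inl x) (Sum.inl y) ↔ u.le x y :=
  Sum.inl_le_inl_iff

theorem parL_inr_le_inr {x y : v.carrier} :
    (parL u v).le (Sum.inr x) (Sum.inr y) ↔ v.le x y :=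
  Sum.inr_le_inr_iff

theorem parL_not_inl_le_inr (x : u.carrier) (y : v.carrier) :
    ¬(parL u v).le (Sum.inl x) (Sum.inr y) :=
  Sum.not_inl_le_inr

theorem parL_not_inr_le_inl (x : v.carrier) (y : u.carrier) :
    ¬(parL u v).le (Sum.inr x) (Sum.inl y) :=
  Sum.not_inr_le_inl

end SumOrder

/-- Substitution: every point `x` of `u` is replaced by a copy of `σ (u.lab x)`, whose points
inherit the order relations of `x`; in other words, the lexicographic sum of the family
`σ (u.lab x)` over `u`. -/
def substL (u : LPoset A) (σ : A → LPoset B) : LPoset B where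
  carrier := Σₗ x : u.carrier, (σ (u.lab x)).carrier
  fin := inferInstanceAs (Fintype (Σ x : u.carrier, (σ (u.lab x)).carrier))
  lab p := (σ (u.lab p.1)).lab p.2

section SubstOrder

variable {u : LPoset A} {σ : A → LPoset B}

theorem substL_mk_le_mk {x : u.carrier} {a b : (σ (u.lab x)).carrier} :
    (u.substL σ).le ⟨x, a⟩ ⟨x, b⟩ ↔ (σ (u.lab x)).le a b := by
  refine Sigma.Lex.le_def.trans ⟨?_, fun h => Or.inr ⟨rfl, h⟩⟩
  rintro (h | ⟨_, h⟩)
  · exact absurd h (lt_irrefl x)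
  · exact h

theorem substL_mk_le_mk_of_ne {x y : u.carrier} {a : (σ (u.lab x)).carrier}
    {b : (σ (u.lab y)).carrier} (h : x ≠ y) :
    (u.substL σ).le ⟨x, a⟩ ⟨y, b⟩ ↔ u.le x y :=
  Sigma.Lex.le_def.trans <| (or_iff_left fun ⟨hxy, _⟩ => h hxy).trans h.le_iff_lt.symm

end SubstOrder

theorem substL_map_le_map {u : LPoset A} {v : LPoset D} {σ : A → LPoset B} {τ : D → LPoset B}
    {i : u.carrier → v.carrier} (hi : ∀ x y, v.le (i x) (i y) ↔ u.le x y)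
    {f : ∀ x, (σ (u.lab x)).carrier → (τ (v.lab (i x))).carrier}
    (hf : ∀ x a b, (τ (v.lab (i x))).le (f x a) (f x b) ↔ (σ (u.lab x)).le a b)
    (p q : (u.substL σ).carrier) :
    (v.substL τ).le (Sigma.map i f p) (Sigma.map i f q) ↔ (u.substL σ).le p q := by
  obtain ⟨x, a⟩ := p
  obtain ⟨y, b⟩ := q
  rcases eq_or_ne x y with rfl | hxy
  · exact (substL_mk_le_mk (u := v)).trans ((hf x a b).trans substL_mk_le_mk.symm)
  · exact (substL_mk_le_mk_of_ne (u := v) ((injective_of_le_iff hi).ne hxy)).trans <|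
      (hi x y).trans (substL_mk_le_mk_of_ne hxy).symm

theorem substL_congr {u v : LPoset A} {σ τ : A → LPoset B} (huv : u ≈ v)
    (hστ : ∀ a, σ a ≈ τ a) : u.substL σ ≈ v.substL τ := by
  obtain ⟨e, he⟩ := huv
  have hfiber : ∀ x, ∃ f : (σ (u.lab x)).carrier ≃o (τ (v.lab (e x))).carrier,
      ∀ a, (τ (v.lab (e x))).lab (f a) = (σ (u.lab x)).lab a := fun x => by
    rw [he]
    exact hστ _
  choose f hf using hfiber
  exact ⟨⟨e.toEquiv.sigmaCongr fun x => (f x).toEquiv,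
    substL_map_le_map (fun _ _ => e.le_iff_le) (fun x _ _ => (f x).le_iff_le) _ _⟩,
    fun p => hf p.1 p.2⟩

end LPoset

namespace Pomset

variable {A B D : Type}

/-- The pomset obtained from `U` by replacing every `a`-labelled point by a copy of `σ a`. -/
noncomputable def subst (U : Pomset A) (σ : A → Pomset B) : Pomset B :=
  Quotient.map (fun u => u.substL fun a => (σ a).out)
    (fun _ _ h => LPoset.substL_congr h fun _ => Setoid.refl _) U

theorem subst_mk (u : LPoset A) (σ : A → LPoset B) :
    subst ⟦u⟧ (fun a => ⟦σ a⟧) = ⟦u.substL σ⟧ :=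
  Quotient.sound (LPoset.substL_congr (Setoid.refl u) fun a => Quotient.mk_out (σ a))

theorem exists_rep_family (σ : A → Pomset B) : ∃ s : A → LPoset B, (fun a => ⟦s a⟧) = σ :=
  ⟨fun a => (σ a).out, funext fun a => Quotient.out_eq (σ a)⟩

theorem subst_empty (σ : A → Pomset B) : (empty A).subst σ = empty B :=
  LPoset.mk_eq_mk_of_equiv (Equiv.equivOfIsEmpty (Σ _ : Fin 0, _) (Fin 0))
    (fun p => p.1.elim0) (fun p => p.1.elim0)

theorem subst_single (a : A) (σ : A → Pomset B) : (single a).subst σ = σ a := by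
  obtain ⟨s, rfl⟩ := exists_rep_family σ
  refine (subst_mk _ _).trans (LPoset.mk_eq_mk_of_equiv
    (Equiv.uniqueSigma fun _ : PUnit => (s a).carrier) ?_ fun _ => rfl)
  rintro ⟨_, b⟩ ⟨_, c⟩
  exact (LPoset.substL_mk_le_mk (u := LPoset.singleL a)).symm

theorem subst_seq (U V : Pomset A) (σ : A → Pomset B) :
    (U.seq V).subst σ = (U.subst σ).seq (V.subst σ) := by
  obtain ⟨s, rfl⟩ := exists_rep_family σ
  induction U, V using Quotient.inductionOn₂ with | _ u v
  rw [subst_mk, subst_mk]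
  refine (subst_mk _ _).trans (LPoset.mk_eq_mk_of_equiv (Equiv.sumSigmaDistrib _) ?_ ?_)
  · rintro ⟨x | x, a⟩ ⟨y | y, b⟩
    · exact LPoset.seqL_inl_le_inl.trans (LPoset.substL_map_le_map (v := u.seqL v)
        (fun _ _ => LPoset.seqL_inl_le_inl) (fun _ _ _ => Iff.rfl) ⟨x, a⟩ ⟨y, b⟩).symm
    · exact iff_of_true (LPoset.seqL_inl_le_inr _ _) <|
        (LPoset.substL_mk_le_mk_of_ne (u := u.seqL v) Sum.inl_ne_inr).2
          (LPoset.seqL_inl_le_inr x y)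
    · exact iff_of_false (LPoset.seqL_not_inr_le_inl _ _) <|
        (LPoset.substL_mk_le_mk_of_ne (u := u.seqL v) Sum.inr_ne_inl).not.2
          (LPoset.seqL_not_inr_le_inl x y)
    · exact LPoset.seqL_inr_le_inr.trans (LPoset.substL_map_le_map (v := u.seqL v)
        (fun _ _ => LPoset.seqL_inr_le_inr) (fun _ _ _ => Iff.rfl) ⟨x, a⟩ ⟨y, b⟩).symm
  · rintro ⟨x | x, a⟩ <;> rfl

theorem subst_par (U V : Pomset A) (σ : A → Pomset B) :
    (U.par V).subst σ = (U.subst σ).par (V.subst σ) := by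
  obtain ⟨s, rfl⟩ := exists_rep_family σ
  induction U, V using Quotient.inductionOn₂ with | _ u v
  rw [subst_mk, subst_mk]
  refine (subst_mk _ _).trans (LPoset.mk_eq_mk_of_equiv (Equiv.sumSigmaDistrib _) ?_ ?_)
  · rintro ⟨x | x, a⟩ ⟨y | y, b⟩
    · exact LPoset.parL_inl_le_inl.trans (LPoset.substL_map_le_map (v := u.parL v)
        (fun _ _ => LPoset.parL_inl_le_inl) (fun _ _ _ => Iff.rfl) ⟨x, a⟩ ⟨y, b⟩).symm
    · exact iff_of_false (LPoset.parL_not_inl_le_inr _ _) <|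
        (LPoset.substL_mk_le_mk_of_ne (u := u.parL v) Sum.inl_ne_inr).not.2
          (LPoset.parL_not_inl_le_inr x y)
    · exact iff_of_false (LPoset.parL_not_inr_le_inl _ _) <|
        (LPoset.substL_mk_le_mk_of_ne (u := u.parL v) Sum.inr_ne_inl).not.2
          (LPoset.parL_not_inr_le_inl x y)
    · exact LPoset.parL_inr_le_inr.trans (LPoset.substL_map_le_map (v := u.parL v)
        (fun _ _ => LPoset.parL_inr_le_inr) (fun _ _ _ => Iff.rfl) ⟨x, a⟩ ⟨y, b⟩).symm
  · rintro ⟨x | x, a⟩ <;> rfl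

theorem subst_map (f : D → A) (U : Pomset D) (σ : A → Pomset B) :
    (U.map f).subst σ = U.subst (σ ∘ f) :=
  Quotient.inductionOn U fun _ => rfl

theorem subst_single_right (U : Pomset A) : U.subst single = U := by
  induction U using Quotient.inductionOn with | _ u
  refine (subst_mk _ _).trans (LPoset.mk_eq_mk_of_equiv
    (Equiv.sigmaUnique u.carrier fun _ => PUnit) ?_ fun _ => rfl)
  rintro ⟨x, ⟨⟩⟩ ⟨y, ⟨⟩⟩
  rcases eq_or_ne x y with rfl | hxy
  · exact iff_of_true le_rfl le_rfl
  · exact (LPoset.substL_mk_le_mk_of_ne (u := u) (σ := LPoset.singleL) hxy).symm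

theorem subst_subst (U : Pomset A) (σ : A → Pomset B) (τ : B → Pomset D) :
    (U.subst σ).subst τ = U.subst fun a => (σ a).subst τ := by
  obtain ⟨s, rfl⟩ := exists_rep_family σ
  obtain ⟨t, rfl⟩ := exists_rep_family τ
  induction U using Quotient.inductionOn with | _ u
  simp only [subst_mk]
  refine LPoset.mk_eq_mk_of_equiv (u := (u.substL s).substL t)
    (v := u.substL fun a => (s a).substL t) (Equiv.sigmaAssoc
      fun x a => (t ((s (u.lab x)).lab a)).carrier) ?_ fun _ => rfl
  rintro ⟨⟨x, a⟩, m⟩ ⟨⟨y, b⟩, n⟩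
  rcases eq_or_ne x y with rfl | hxy
  · refine (LPoset.substL_mk_le_mk (u := u) (σ := fun a => (s a).substL t)).trans ?_
    exact (LPoset.substL_map_le_map (v := u.substL s)
      (i := fun a => (⟨x, a⟩ : (u.substL s).carrier)) (σ := t) (τ := t)
      (fun _ _ => LPoset.substL_mk_le_mk (u := u)) (fun _ _ _ => Iff.rfl)
      ⟨a, m⟩ ⟨b, n⟩).symm
  · have hne : (⟨x, a⟩ : (u.substL s).carrier) ≠ ⟨y, b⟩ := fun h => hxy (congrArg Sigma.fst h)
    exact (LPoset.substL_mk_le_mk_of_ne (u := u) hxy).trans <|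
      (LPoset.substL_mk_le_mk_of_ne (u := u) hxy).symm.trans
        (LPoset.substL_mk_le_mk_of_ne (u := u.substL s) hne).symm

theorem map_eq_subst (f : B → A) (U : Pomset B) : U.map f = U.subst (single ∘ f) := by
  rw [← subst_map, subst_single_right]

protected theorem IsSP.subst {U : Pomset A} (hU : U.IsSP) {σ : A → Pomset B}
    (hσ : ∀ a, (σ a).IsSP) : (U.subst σ).IsSP := by
  induction hU with
  | empty => exact subst_empty σ ▸ .empty
  | single a => exact subst_single a σ ▸ hσ a
  | seq _ _ ihU ihV => exact subst_seq _ _ σ ▸ ihU.seq ihV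
  | par _ _ ihU ihV => exact subst_par _ _ σ ▸ ihU.par ihV

protected theorem IsSP.map {U : Pomset A} (hU : U.IsSP) (f : A → B) : (U.map f).IsSP :=
  map_eq_subst f U ▸ hU.subst fun a => .single (f a)

end Pomset

/-! ### Contexts -/

namespace LPoset

variable {A : Type}

theorem exists_unique_point_of_ne_none (v : LPoset A) {o : Option A} (ho : o ≠ none) :
    ∃ a : (o.elim v singleL).carrier, (∀ b, b = a) ∧
      (o.elim v singleL).lab a = o.get (Option.isSome_iff_ne_none.2 ho) := by
  obtain ⟨x, rfl⟩ := Option.ne_none_iff_exists'.1 ho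
  exact ⟨PUnit.unit, fun _ => rfl, rfl⟩

theorem exists_orderIso_of_eq_none (v : LPoset A) {o : Option A} (ho : o = none) :
    ∃ e : v.carrier ≃o (o.elim v singleL).carrier,
      ∀ y, (o.elim v singleL).lab (e y) = v.lab y := by
  subst ho
  exact ⟨OrderIso.refl _, fun _ => rfl⟩

theorem insL_equiv_substL {c : LPoset (Option A)} (hc : c.uniqueStarL) (v : LPoset A) :
    c.insL v ≈ c.substL fun o => o.elim v singleL := by
  have ⟨s, hs, hs_unique⟩ := hc
  choose pt hpt hpt_lab using fun x : {x : c.carrier // c.lab x ≠ none} =>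
    exists_unique_point_of_ne_none v x.2
  obtain ⟨e, he⟩ := exists_orderIso_of_eq_none v hs
  have hne : ∀ x : {x : c.carrier // c.lab x ≠ none}, x.1 ≠ s := fun x h => x.2 (h ▸ hs)
  let f : (c.insL v).carrier → (c.substL fun o => o.elim v singleL).carrier :=
    Sum.elim (fun x => ⟨x.1, pt x⟩) (fun y => ⟨s, e y⟩)
  have hle : ∀ p q, LPoset.le _ (f p) (f q) ↔ (c.insL v).le p q := by
    rintro (x | x) (y | y)
    · rcases eq_or_ne x y with rfl | hxy
      · exact iff_of_true le_rfl le_rfl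
      · exact substL_mk_le_mk_of_ne (Subtype.coe_injective.ne hxy)
    · exact (substL_mk_le_mk_of_ne (hne x)).trans
        ⟨fun h => ⟨hc, s, hs, h⟩, fun ⟨_, t, ht, h⟩ => hs_unique t ht ▸ h⟩
    · exact (substL_mk_le_mk_of_ne (hne y).symm).trans
        ⟨fun h => ⟨hc, s, hs, h⟩, fun ⟨_, t, ht, h⟩ => hs_unique t ht ▸ h⟩
    · exact substL_mk_le_mk.trans e.le_iff_le
  have hsurj : Function.Surjective f := by
    rintro ⟨x, a⟩
    by_cases hx : c.lab x = none
    · obtain rfl := hs_unique x hx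
      exact ⟨Sum.inr (e.symm a), congrArg (Sigma.mk x) (e.apply_symm_apply a)⟩
    · exact ⟨Sum.inl ⟨x, hx⟩, congrArg (Sigma.mk x) (hpt ⟨x, hx⟩ a).symm⟩
  refine ⟨⟨Equiv.ofBijective f ⟨injective_of_le_iff hle, hsurj⟩, hle _ _⟩, ?_⟩
  rintro (x | y)
  exacts [hpt_lab x, he y]

theorem uniqueStarL_substL {c : LPoset (Option A)} {t : Option A → LPoset (Option A)}
    (hc : c.uniqueStarL) (hnone : (t none).uniqueStarL)
    (hsome : ∀ a x, (t (some a)).lab x ≠ none) : (c.substL t).uniqueStarL := by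
  obtain ⟨s, hs, hs_unique⟩ := hc
  have hfiber : ∀ o, o = none → (t o).uniqueStarL := by
    rintro _ rfl
    exact hnone
  have heq_none : ∀ o x, (t o).lab x = none → o = none := by
    rintro (_ | a) x hx
    exacts [rfl, absurd hx (hsome a x)]
  obtain ⟨a, ha, ha_unique⟩ := hfiber _ hs
  refine ⟨⟨s, a⟩, ha, ?_⟩
  rintro ⟨x, b⟩ hb
  obtain rfl := hs_unique x (heq_none _ b hb)
  exact congrArg (Sigma.mk x) (ha_unique b hb)

end LPoset

namespace Pomset

variable {A B : Type}

theorem subst_elim_mk (c : LPoset (Option A)) (v : LPoset B) (σ : A → LPoset B) :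
    subst ⟦c⟧ (fun o => o.elim ⟦v⟧ fun a => ⟦σ a⟧) = ⟦c.substL fun o => o.elim v σ⟧ := by
  have hcases : (fun o : Option A => o.elim (⟦v⟧ : Pomset B) fun a => ⟦σ a⟧) =
      fun o => ⟦o.elim v σ⟧ := by
    funext o
    cases o <;> rfl
  exact (congrArg _ hcases).trans (subst_mk c _)

theorem ins_eq_subst {C : Pomset (Option A)} (hC : C.IsCtx) (V : Pomset A) :
    C.ins V = C.subst fun o => o.elim V single := by
  induction C, V using Quotient.inductionOn₂ with | _ c v
  exact (Quotient.sound (LPoset.insL_equiv_substL hC v)).trans (subst_elim_mk c v _).symm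

protected theorem IsSP.ins {C : Pomset (Option A)} {V : Pomset A} (hC : C.IsSPCtx)
    (hV : V.IsSP) : (C.ins V).IsSP := by
  rw [ins_eq_subst hC.1]
  refine hC.2.subst ?_
  rintro (_ | a)
  exacts [hV, .single a]

/-- The context `C[D]`, in which the gap of `C` is filled by the context `D`. -/
noncomputable def compCtx (C D : Pomset (Option A)) : Pomset (Option A) :=
  C.subst fun o => o.elim D (single ∘ some)

protected theorem IsCtx.compCtx {C D : Pomset (Option A)} (hC : C.IsCtx) (hD : D.IsCtx) :
    (C.compCtx D).IsCtx := by
  induction C, D using Quotient.inductionOn₂ with | _ c d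
  have hcomp : compCtx ⟦c⟧ ⟦d⟧ = ⟦c.substL fun o => o.elim d (LPoset.singleL ∘ some)⟧ :=
    subst_elim_mk c d _
  exact hcomp ▸ LPoset.uniqueStarL_substL hC hD fun a _ => Option.some_ne_none a

theorem compCtx_ins {C D : Pomset (Option A)} (hC : C.IsCtx) (hD : D.IsCtx) (V : Pomset A) :
    (C.compCtx D).ins V = C.ins (D.ins V) := by
  rw [ins_eq_subst (hC.compCtx hD), compCtx, subst_subst, ins_eq_subst hC, ins_eq_subst hD]
  congr 1
  funext o
  cases o with
  | none => rfl
  | some a => exact subst_single (some a) _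

theorem IsSPCtx.compCtx {C D : Pomset (Option A)} (hC : C.IsSPCtx) (hD : D.IsSPCtx) :
    (C.compCtx D).IsSPCtx := by
  refine ⟨hC.1.compCtx hD.1, hC.2.subst ?_⟩
  rintro (_ | a)
  exacts [hD.2, .single _]

theorem isCtx_starCtx : (starCtx A).IsCtx :=
  ⟨PUnit.unit, rfl, fun _ _ => rfl⟩

theorem starCtx_ins (V : Pomset A) : (starCtx A).ins V = V := by
  rw [ins_eq_subst isCtx_starCtx, starCtx, subst_single, Option.elim_none]

theorem subst_map_some (U V : Pomset A) : ((U.map some).subst fun o => o.elim V single) = U :=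
  (subst_map some U _).trans (subst_single_right U)

section Translations

variable {C : Pomset (Option A)}

theorem IsCtx.seq_map_some (hC : C.IsCtx) (U : Pomset A) : (C.seq (U.map some)).IsCtx := by
  induction C, U using Quotient.inductionOn₂ with | _ c u
  obtain ⟨s, hs, hs_unique⟩ := hC
  refine ⟨Sum.inl s, hs, ?_⟩
  rintro (x | x) hx
  exacts [congrArg Sum.inl (hs_unique x hx), absurd hx (Option.some_ne_none _)]

theorem IsCtx.map_some_seq (hC : C.IsCtx) (U : Pomset A) : ((U.map some).seq C).IsCtx := by
  induction C, U using Quotient.inductionOn₂ with | _ c u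
  obtain ⟨s, hs, hs_unique⟩ := hC
  refine ⟨Sum.inr s, hs, ?_⟩
  rintro (x | x) hx
  exacts [absurd hx (Option.some_ne_none _), congrArg Sum.inr (hs_unique x hx)]

theorem IsCtx.par_map_some (hC : C.IsCtx) (U : Pomset A) : (C.par (U.map some)).IsCtx := by
  induction C, U using Quotient.inductionOn₂ with | _ c u
  obtain ⟨s, hs, hs_unique⟩ := hC
  refine ⟨Sum.inl s, hs, ?_⟩
  rintro (x | x) hx
  exacts [congrArg Sum.inl (hs_unique x hx), absurd hx (Option.some_ne_none _)]

theorem seq_map_some_ins (hC : C.IsCtx) (U V : Pomset A) :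
    (C.seq (U.map some)).ins V = (C.ins V).seq U := by
  rw [ins_eq_subst (hC.seq_map_some U), subst_seq, subst_map_some, ins_eq_subst hC]

theorem map_some_seq_ins (hC : C.IsCtx) (U V : Pomset A) :
    ((U.map some).seq C).ins V = U.seq (C.ins V) := by
  rw [ins_eq_subst (hC.map_some_seq U), subst_seq, subst_map_some, ins_eq_subst hC]

theorem par_map_some_ins (hC : C.IsCtx) (U V : Pomset A) :
    (C.par (U.map some)).ins V = (C.ins V).par U := by
  rw [ins_eq_subst (hC.par_map_some U), subst_par, subst_map_some, ins_eq_subst hC]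

end Translations

/-! ### The laws of pomset composition -/

theorem seq_assoc (U V W : Pomset A) : (U.seq V).seq W = U.seq (V.seq W) := by
  induction U, V, W using Quotient.inductionOn₃ with | _ u v w
  refine Quotient.sound ⟨OrderIso.sumLexAssoc u.carrier v.carrier w.carrier, ?_⟩
  rintro ((x | x) | x) <;> rfl

theorem par_assoc (U V W : Pomset A) : (U.par V).par W = U.par (V.par W) := by
  induction U, V, W using Quotient.inductionOn₃ with | _ u v w
  refine Quotient.sound ⟨OrderIso.sumAssoc u.carrier v.carrier w.carrier, ?_⟩
  rintro ((x | x) | x) <;> rfl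

theorem par_comm (U V : Pomset A) : U.par V = V.par U := by
  induction U, V using Quotient.inductionOn₂ with | _ u v
  refine Quotient.sound ⟨OrderIso.sumComm u.carrier v.carrier, ?_⟩
  rintro (x | x) <;> rfl

theorem seq_empty (U : Pomset A) : U.seq (empty A) = U := by
  induction U using Quotient.inductionOn with | _ u
  refine Quotient.sound ⟨OrderIso.sumLexEmpty (α := u.carrier) (β := Fin 0), ?_⟩
  rintro (x | x)
  exacts [rfl, x.elim0]

theorem empty_seq (U : Pomset A) : (empty A).seq U = U := by
  induction U using Quotient.inductionOn with | _ u
  refine Quotient.sound ⟨OrderIso.emptySumLex (α := u.carrier) (β := Fin 0), ?_⟩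
  rintro (x | x)
  exacts [x.elim0, rfl]

theorem par_empty (U : Pomset A) : U.par (empty A) = U := by
  induction U using Quotient.inductionOn with | _ u
  refine LPoset.mk_eq_mk_of_equiv (Equiv.sumEmpty u.carrier (Fin 0)) ?_ ?_
  · rintro (x | x) (y | y)
    exacts [LPoset.parL_inl_le_inl.symm, y.elim0, x.elim0, x.elim0]
  · rintro (x | x)
    exacts [rfl, x.elim0]

end Pomset

/-! ### Languages -/

namespace Lang

variable {A : Type} (L K M : Lang A)

theorem seq_eq_image2 : Lang.seq L K = Set.image2 Pomset.seq L K := by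
  ext W
  simp only [Lang.seq, Set.mem_ofPred_eq, Set.mem_image2, eq_comm]

theorem par_eq_image2 : Lang.par L K = Set.image2 Pomset.par L K := by
  ext W
  simp only [Lang.par, Set.mem_ofPred_eq, Set.mem_image2, eq_comm]

theorem seq_assoc : Lang.seq (Lang.seq L K) M = Lang.seq L (Lang.seq K M) := by
  simp only [seq_eq_image2]
  exact Set.image2_assoc Pomset.seq_assoc

theorem par_assoc : Lang.par (Lang.par L K) M = Lang.par L (Lang.par K M) := by
  simp only [par_eq_image2]
  exact Set.image2_assoc Pomset.par_assoc

theorem par_comm : Lang.par L K = Lang.par K L := by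
  simp only [par_eq_image2]
  exact Set.image2_comm Pomset.par_comm

theorem seq_union : Lang.seq L (K ∪ M) = Lang.seq L K ∪ Lang.seq L M := by
  simp only [seq_eq_image2, Set.image2_union_right]

theorem union_seq : Lang.seq (L ∪ K) M = Lang.seq L M ∪ Lang.seq K M := by
  simp only [seq_eq_image2, Set.image2_union_left]

theorem par_union : Lang.par L (K ∪ M) = Lang.par L K ∪ Lang.par L M := by
  simp only [par_eq_image2, Set.image2_union_right]

theorem seq_one : Lang.seq L {Pomset.empty A} = L := by
  simp only [seq_eq_image2, Set.image2_singleton_right, Pomset.seq_empty, Set.image_id']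

theorem one_seq : Lang.seq {Pomset.empty A} L = L := by
  simp only [seq_eq_image2, Set.image2_singleton_left, Pomset.empty_seq, Set.image_id']

theorem par_one : Lang.par L {Pomset.empty A} = L := by
  simp only [par_eq_image2, Set.image2_singleton_right, Pomset.par_empty, Set.image_id']

theorem seq_zero : Lang.seq L ∅ = ∅ := by
  rw [seq_eq_image2, Set.image2_empty_right]

theorem zero_seq : Lang.seq ∅ L = ∅ := by
  rw [seq_eq_image2, Set.image2_empty_left]

theorem par_zero : Lang.par L ∅ = ∅ := by
  rw [par_eq_image2, Set.image2_empty_right]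

variable {L K M} in
theorem seq_subset_seq {L' K' : Lang A} (hL : L ⊆ L') (hK : K ⊆ K') :
    Lang.seq L K ⊆ Lang.seq L' K' := by
  simpa only [seq_eq_image2] using Set.image2_subset hL hK

theorem seq_pow (n : ℕ) : Lang.seq L (L.pow n) = L.pow (n + 1) := by
  induction n with
  | zero => rw [Lang.pow, Lang.pow, Lang.pow, seq_one, one_seq]
  | succ n ih => rw [Lang.pow, ← seq_assoc, ih]; rfl

theorem seq_star : Lang.seq L L.star = ⋃ n, L.pow (n + 1) := by
  simp only [Lang.star, ← seq_pow, seq_eq_image2, Set.image2_iUnion_right]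

theorem star_seq_self : Lang.seq L.star L = ⋃ n, L.pow (n + 1) := by
  simp only [Lang.star, Lang.pow, seq_eq_image2, Set.image2_iUnion_left]

theorem one_union_seq_star : {Pomset.empty A} ∪ Lang.seq L L.star = L.star := by
  rw [seq_star]
  exact Set.union_iUnion_nat_succ L.pow

theorem one_union_star_seq : {Pomset.empty A} ∪ Lang.seq L.star L = L.star := by
  rw [star_seq_self]
  exact Set.union_iUnion_nat_succ L.pow

end Lang

section SeriesParallel

variable {A : Type} {L K : Lang A}

theorem Lang.seq_subset_SPset (hL : L ⊆ SPset A) (hK : K ⊆ SPset A) :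
    Lang.seq L K ⊆ SPset A := by
  rintro _ ⟨U, hU, V, hV, rfl⟩
  exact (hL hU).seq (hK hV)

theorem Lang.par_subset_SPset (hL : L ⊆ SPset A) (hK : K ⊆ SPset A) :
    Lang.par L K ⊆ SPset A := by
  rintro _ ⟨U, hU, V, hV, rfl⟩
  exact (hL hU).par (hK hV)

theorem Lang.pow_subset_SPset (hL : L ⊆ SPset A) : ∀ n, L.pow n ⊆ SPset A
  | 0 => Set.singleton_subset_iff.2 .empty
  | n + 1 => Lang.seq_subset_SPset (pow_subset_SPset hL n) hL

theorem Lang.star_subset_SPset (hL : L ⊆ SPset A) : L.star ⊆ SPset A :=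
  Set.iUnion_subset (Lang.pow_subset_SPset hL)

theorem Term.lang_subset_SPset : ∀ e : Term A, e.lang ⊆ SPset A
  | .zero => Set.empty_subset _
  | .one => Set.singleton_subset_iff.2 .empty
  | .var a => Set.singleton_subset_iff.2 (.single a)
  | .add e f => Set.union_subset e.lang_subset_SPset f.lang_subset_SPset
  | .seq e f => Lang.seq_subset_SPset e.lang_subset_SPset f.lang_subset_SPset
  | .par e f => Lang.par_subset_SPset e.lang_subset_SPset f.lang_subset_SPset
  | .star e => Lang.star_subset_SPset e.lang_subset_SPset

end SeriesParallel

/-! ### The closure operator -/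

section Closure

variable {A : Type} {H : HypSet A} {L K F G L' K' : Lang A}

theorem subset_cl : L ⊆ cl H L := fun _ => closure.base

theorem cl_subset_cl_iff : cl H L ⊆ cl H K ↔ L ⊆ cl H K := by
  refine ⟨subset_cl.trans, fun h U hU => ?_⟩
  induction hU with
  | base hU => exact h hU
  | step hef hC _ hU ih => exact closure.step hef hC ih hU

theorem cl_mono (h : L ⊆ K) : cl H L ⊆ cl H K :=
  cl_subset_cl_iff.2 (h.trans subset_cl)

theorem cl_eq_cl_iff : cl H L = cl H K ↔ L ⊆ cl H K ∧ K ⊆ cl H L := by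
  rw [Set.Subset.antisymm_iff, cl_subset_cl_iff, cl_subset_cl_iff]

theorem cl_union_eq_iff : cl H (L ∪ K) = cl H K ↔ L ⊆ cl H K := by
  rw [cl_eq_cl_iff, Set.union_subset_iff]
  exact ⟨fun h => h.1.1, fun h => ⟨⟨h, subset_cl⟩, Set.subset_union_right.trans subset_cl⟩⟩

theorem union_subset_cl (hL : L ⊆ cl H L') (hK : K ⊆ cl H K') : L ∪ K ⊆ cl H (L' ∪ K') :=
  Set.union_subset (hL.trans (cl_mono Set.subset_union_left))
    (hK.trans (cl_mono Set.subset_union_right))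

theorem cl_subset_SPset (hL : L ⊆ SPset A) : cl H L ⊆ SPset A := by
  intro U hU
  induction hU with
  | base hU => exact hL hU
  | @step e _ _ _ hC _ _ hU _ => exact .ins hC (e.lang_subset_SPset hU)

theorem ins_mem_cl {C : Pomset (Option A)} (hC : C.IsSPCtx) (h : ∀ V ∈ L, C.ins V ∈ cl H K)
    {U : Pomset A} (hU : U ∈ cl H L) : C.ins U ∈ cl H K := by
  induction hU with
  | base hU => exact h _ hU
  | @step e f hef D hD _ U hU ih =>
    rw [← Pomset.compCtx_ins hC.1 hD.1]
    refine closure.step hef (hC.compCtx hD) (fun V hV => ?_) hU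
    rw [Pomset.compCtx_ins hC.1 hD.1]
    exact ih V hV

theorem seq_mem_cl_of_mem_left {U V : Pomset A} (hV : V.IsSP) (hU : U ∈ cl H L)
    (h : ∀ W ∈ L, W.seq V ∈ cl H K) : U.seq V ∈ cl H K := by
  have hins (W : Pomset A) : ((starCtx A).seq (V.map some)).ins W = W.seq V := by
    rw [Pomset.seq_map_some_ins Pomset.isCtx_starCtx, Pomset.starCtx_ins]
  rw [← hins]
  exact ins_mem_cl ⟨Pomset.isCtx_starCtx.seq_map_some V, .seq (.single none) (hV.map some)⟩
    (fun W hW => hins W ▸ h W hW) hU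

theorem seq_mem_cl_of_mem_right {U V : Pomset A} (hU : U.IsSP) (hV : V ∈ cl H L)
    (h : ∀ W ∈ L, U.seq W ∈ cl H K) : U.seq V ∈ cl H K := by
  have hins (W : Pomset A) : ((U.map some).seq (starCtx A)).ins W = U.seq W := by
    rw [Pomset.map_some_seq_ins Pomset.isCtx_starCtx, Pomset.starCtx_ins]
  rw [← hins]
  exact ins_mem_cl ⟨Pomset.isCtx_starCtx.map_some_seq U, .seq (hU.map some) (.single none)⟩
    (fun W hW => hins W ▸ h W hW) hV

theorem par_mem_cl_of_mem_left {U V : Pomset A} (hV : V.IsSP) (hU : U ∈ cl H L)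
    (h : ∀ W ∈ L, W.par V ∈ cl H K) : U.par V ∈ cl H K := by
  have hins (W : Pomset A) : ((starCtx A).par (V.map some)).ins W = W.par V := by
    rw [Pomset.par_map_some_ins Pomset.isCtx_starCtx, Pomset.starCtx_ins]
  rw [← hins]
  exact ins_mem_cl ⟨Pomset.isCtx_starCtx.par_map_some V, .par (.single none) (hV.map some)⟩
    (fun W hW => hins W ▸ h W hW) hU

theorem seq_cl_subset (hL : L ⊆ SPset A) (hK : K ⊆ SPset A) :
    Lang.seq (cl H L) (cl H K) ⊆ cl H (Lang.seq L K) := by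
  rintro _ ⟨U, hU, V, hV, rfl⟩
  refine seq_mem_cl_of_mem_left (cl_subset_SPset hK hV) hU fun U' hU' => ?_
  exact seq_mem_cl_of_mem_right (hL hU') hV fun V' hV' => subset_cl ⟨U', hU', V', hV', rfl⟩

theorem par_cl_subset (hL : L ⊆ SPset A) (hK : K ⊆ SPset A) :
    Lang.par (cl H L) (cl H K) ⊆ cl H (Lang.par L K) := by
  rintro _ ⟨U, hU, V, hV, rfl⟩
  refine par_mem_cl_of_mem_left (cl_subset_SPset hK hV) hU fun U' hU' => ?_
  rw [Pomset.par_comm]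
  refine par_mem_cl_of_mem_left (hL hU') hV fun V' hV' => ?_
  rw [Pomset.par_comm]
  exact subset_cl ⟨U', hU', V', hV', rfl⟩

theorem seq_subset_cl (hL' : L' ⊆ SPset A) (hK' : K' ⊆ SPset A)
    (hL : L ⊆ cl H L') (hK : K ⊆ cl H K') : Lang.seq L K ⊆ cl H (Lang.seq L' K') :=
  (Lang.seq_subset_seq hL hK).trans (seq_cl_subset hL' hK')

theorem par_subset_cl (hL' : L' ⊆ SPset A) (hK' : K' ⊆ SPset A)
    (hL : L ⊆ cl H L') (hK : K ⊆ cl H K') : Lang.par L K ⊆ cl H (Lang.par L' K') := by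
  rintro _ ⟨U, hU, V, hV, rfl⟩
  exact par_cl_subset hL' hK' ⟨U, hL hU, V, hK hV, rfl⟩

theorem star_seq_subset_cl (hF : F ⊆ SPset A) (hG : G ⊆ SPset A) (hLG : L ⊆ cl H G)
    (hFG : Lang.seq F G ⊆ cl H G) : Lang.seq F.star L ⊆ cl H G := by
  have hpow (n : ℕ) : Lang.seq (F.pow n) L ⊆ cl H G := by
    induction n with
    | zero => rwa [Lang.pow, Lang.one_seq]
    | succ n ih =>
      rw [← Lang.seq_pow, Lang.seq_assoc]
      exact (seq_subset_cl hF hG subset_cl ih).trans (cl_subset_cl_iff.2 hFG)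
  rintro _ ⟨U, hU, V, hV, rfl⟩
  obtain ⟨n, hn⟩ := Set.mem_iUnion.1 hU
  exact hpow n ⟨U, hn, V, hV, rfl⟩

theorem seq_star_subset_cl (hF : F ⊆ SPset A) (hG : G ⊆ SPset A) (hLF : L ⊆ cl H F)
    (hFG : Lang.seq F G ⊆ cl H F) : Lang.seq L G.star ⊆ cl H F := by
  have hpow (n : ℕ) : Lang.seq L (G.pow n) ⊆ cl H F := by
    induction n with
    | zero => rwa [Lang.pow, Lang.seq_one]
    | succ n ih =>
      rw [Lang.pow, ← Lang.seq_assoc]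
      exact (seq_subset_cl hF hG ih subset_cl).trans (cl_subset_cl_iff.2 hFG)
  rintro _ ⟨U, hU, V, hV, rfl⟩
  obtain ⟨n, hn⟩ := Set.mem_iUnion.1 hV
  exact hpow n ⟨U, hU, V, hn, rfl⟩

theorem star_subset_cl (hL : L ⊆ SPset A) (hK : K ⊆ SPset A) (h : L ⊆ cl H K) :
    L.star ⊆ cl H K.star := by
  have hone : {Pomset.empty A} ⊆ cl H K.star :=
    (Set.subset_union_left.trans (Lang.one_union_seq_star K).subset).trans subset_cl
  have hstep : Lang.seq L K.star ⊆ cl H K.star :=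
    (seq_subset_cl hK (Lang.star_subset_SPset hK) h subset_cl).trans <|
      cl_mono (Set.subset_union_right.trans (Lang.one_union_seq_star K).subset)
  simpa only [Lang.seq_one] using
    star_seq_subset_cl hL (Lang.star_subset_SPset hK) hone hstep

theorem cl_union_congr (hL : cl H L = cl H L') (hK : cl H K = cl H K') :
    cl H (L ∪ K) = cl H (L' ∪ K') := by
  obtain ⟨hL, hL'⟩ := cl_eq_cl_iff.1 hL
  obtain ⟨hK, hK'⟩ := cl_eq_cl_iff.1 hK
  exact cl_eq_cl_iff.2 ⟨union_subset_cl hL hK, union_subset_cl hL' hK'⟩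

theorem cl_seq_congr (hL : L ⊆ SPset A) (hL' : L' ⊆ SPset A) (hK : K ⊆ SPset A)
    (hK' : K' ⊆ SPset A) (hLL' : cl H L = cl H L') (hKK' : cl H K = cl H K') :
    cl H (Lang.seq L K) = cl H (Lang.seq L' K') := by
  obtain ⟨hLL', hL'L⟩ := cl_eq_cl_iff.1 hLL'
  obtain ⟨hKK', hK'K⟩ := cl_eq_cl_iff.1 hKK'
  exact cl_eq_cl_iff.2 ⟨seq_subset_cl hL' hK' hLL' hKK', seq_subset_cl hL hK hL'L hK'K⟩

theorem cl_par_congr (hL : L ⊆ SPset A) (hL' : L' ⊆ SPset A) (hK : K ⊆ SPset A)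
    (hK' : K' ⊆ SPset A) (hLL' : cl H L = cl H L') (hKK' : cl H K = cl H K') :
    cl H (Lang.par L K) = cl H (Lang.par L' K') := by
  obtain ⟨hLL', hL'L⟩ := cl_eq_cl_iff.1 hLL'
  obtain ⟨hKK', hK'K⟩ := cl_eq_cl_iff.1 hKK'
  exact cl_eq_cl_iff.2 ⟨par_subset_cl hL' hK' hLL' hKK', par_subset_cl hL hK hL'L hK'K⟩

theorem cl_star_congr (hL : L ⊆ SPset A) (hK : K ⊆ SPset A) (h : cl H L = cl H K) :
    cl H L.star = cl H K.star := by
  obtain ⟨hLK, hKL⟩ := cl_eq_cl_iff.1 h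
  exact cl_eq_cl_iff.2 ⟨star_subset_cl hL hK hLK, star_subset_cl hK hL hKL⟩

end Closure

/-! ### Soundness and change of hypotheses -/

section Soundness

variable {A : Type} {H H' : HypSet A} {e f : Term A}

theorem lang_subset_cl_of_hyp (h : (e, f) ∈ H) : e.lang ⊆ cl H f.lang := by
  intro U hU
  rw [← Pomset.starCtx_ins U]
  refine closure.step h ⟨Pomset.isCtx_starCtx, .single none⟩ (fun V hV => ?_) hU
  rw [Pomset.starCtx_ins]
  exact closure.base hV

theorem CongH.cl_lang_eq (h : CongH H e f) : cl H e.lang = cl H f.lang := by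
  induction h with
  | refl => rfl
  | symm _ ih => exact ih.symm
  | trans _ _ ih₁ ih₂ => exact ih₁.trans ih₂
  | addCong _ _ ihe ihf => exact cl_union_congr ihe ihf
  | seqCong _ _ ihe ihf =>
    exact cl_seq_congr (Term.lang_subset_SPset _) (Term.lang_subset_SPset _)
      (Term.lang_subset_SPset _) (Term.lang_subset_SPset _) ihe ihf
  | parCong _ _ ihe ihf =>
    exact cl_par_congr (Term.lang_subset_SPset _) (Term.lang_subset_SPset _)
      (Term.lang_subset_SPset _) (Term.lang_subset_SPset _) ihe ihf
  | starCong _ ih =>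
    exact cl_star_congr (Term.lang_subset_SPset _) (Term.lang_subset_SPset _) ih
  | addZero => exact congrArg (cl H) (Set.union_empty _)
  | addIdem => exact congrArg (cl H) (Set.union_self _)
  | addComm => exact congrArg (cl H) (Set.union_comm _ _)
  | addAssoc => exact congrArg (cl H) (Set.union_assoc _ _ _).symm
  | seqAssoc => exact congrArg (cl H) (Lang.seq_assoc _ _ _).symm
  | seqDistL => exact congrArg (cl H) (Lang.seq_union _ _ _)
  | seqDistR => exact congrArg (cl H) (Lang.union_seq _ _ _)
  | seqOneR => exact congrArg (cl H) (Lang.seq_one _)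
  | seqOneL => exact congrArg (cl H) (Lang.one_seq _)
  | seqZeroR => exact congrArg (cl H) (Lang.seq_zero _)
  | seqZeroL => exact congrArg (cl H) (Lang.zero_seq _)
  | parComm => exact congrArg (cl H) (Lang.par_comm _ _)
  | parOne => exact congrArg (cl H) (Lang.par_one _)
  | parZero => exact congrArg (cl H) (Lang.par_zero _)
  | parAssoc => exact congrArg (cl H) (Lang.par_assoc _ _ _).symm
  | parDist => exact congrArg (cl H) (Lang.par_union _ _ _)
  | starUnfoldL => exact congrArg (cl H) (Lang.one_union_seq_star _)
  | starUnfoldR => exact congrArg (cl H) (Lang.one_union_star_seq _)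
  | @lfpL e f g _ ih =>
    obtain ⟨he, hfg⟩ := Set.union_subset_iff.1 (cl_union_eq_iff.1 ih)
    exact cl_union_eq_iff.2 (star_seq_subset_cl f.lang_subset_SPset g.lang_subset_SPset he hfg)
  | @lfpR e f g _ ih =>
    obtain ⟨he, hfg⟩ := Set.union_subset_iff.1 (cl_union_eq_iff.1 ih)
    exact cl_union_eq_iff.2 (seq_star_subset_cl f.lang_subset_SPset g.lang_subset_SPset he hfg)
  | hyp hef => exact cl_union_eq_iff.2 (lang_subset_cl_of_hyp hef)

theorem LeH.lang_subset_cl (h : LeH H e f) : e.lang ⊆ cl H f.lang :=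
  cl_union_eq_iff.1 (CongH.cl_lang_eq h)

theorem cl_subset_cl_of_implies (hH : Implies H H') (L : Lang A) : cl H' L ⊆ cl H L := by
  intro U hU
  induction hU with
  | base hU => exact subset_cl hU
  | @step e f hef C hC _ U hU ih =>
    exact ins_mem_cl hC ih ((hH _ hef).lang_subset_cl hU)

theorem cl_cl_of_implies (hH : Implies H H') (L : Lang A) : cl H (cl H' L) = cl H L :=
  cl_eq_cl_iff.2 ⟨cl_subset_cl_of_implies hH L, subset_cl.trans subset_cl⟩

theorem CongH.of_implies (hH : Implies H H') (h : CongH H' e f) : CongH H e f := by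
  induction h with
  | refl => exact .refl _
  | symm _ ih => exact ih.symm
  | trans _ _ ih₁ ih₂ => exact ih₁.trans ih₂
  | addCong _ _ ihe ihf => exact ihe.addCong ihf
  | seqCong _ _ ihe ihf => exact ihe.seqCong ihf
  | parCong _ _ ihe ihf => exact ihe.parCong ihf
  | starCong _ ih => exact ih.starCong
  | addZero => exact .addZero _
  | addIdem => exact .addIdem _
  | addComm => exact .addComm _ _
  | addAssoc => exact .addAssoc _ _ _
  | seqAssoc => exact .seqAssoc _ _ _
  | seqDistL => exact .seqDistL _ _ _
  | seqDistR => exact .seqDistR _ _ _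
  | seqOneR => exact .seqOneR _
  | seqOneL => exact .seqOneL _
  | seqZeroR => exact .seqZeroR _
  | seqZeroL => exact .seqZeroL _
  | parComm => exact .parComm _ _
  | parOne => exact .parOne _
  | parZero => exact .parZero _
  | parAssoc => exact .parAssoc _ _ _
  | parDist => exact .parDist _ _ _
  | starUnfoldL => exact .starUnfoldL _
  | starUnfoldR => exact .starUnfoldR _
  | lfpL _ ih => exact ih.lfpL
  | lfpR _ ih => exact ih.lfpR
  | hyp hef => exact hH _ hef

end Soundness

/-- **Carry-over of completeness along a reduction.** -/
theorem carry_over (A : Type) (H H' : HypSet A) (r : Term A → Term A)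
    (hr : IsReduction H H' r) :
    (Complete H' → Complete H) ∧
    (∀ e f : Term A, cl H e.lang = cl H f.lang ↔ cl H' (r e).lang = cl H' (r f).lang) := by
  refine ⟨fun hcomplete e f hef => ?_, fun e f => ⟨hr.reflect e f, fun h => ?_⟩⟩
  · have hrer : CongH H (r e) (r f) := (hcomplete _ _ (hr.reflect e f hef)).of_implies hr.implies
    exact (hr.equiv e).trans (hrer.trans (hr.equiv f).symm)
  · calc cl H e.lang = cl H (r e).lang := (hr.equiv e).cl_lang_eq
      _ = cl H (cl H' (r e).lang) := (cl_cl_of_implies hr.implies _).symm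
      _ = cl H (cl H' (r f).lang) := congrArg (cl H) h
      _ = cl H (r f).lang := cl_cl_of_implies hr.implies _
      _ = cl H f.lang := (hr.equiv f).cl_lang_eq.symm

end CKAH
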